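/- (Randomization cannot help.) Suppose the encoders use randomized (behavioral) encoding strategies: at each time t, encoder i selects Z^i_t according to a probability distribution on 𝒵^i that depends on (X^i_{1:t}, Z^i_{1:t-1}), where the randomizations are independent across encoders and time instants and independent of the source and channel noises; the memory update and decoding rules l¹_{1:T}, l²_{1:T}, g_{1:T} are deterministic. Then the resulting expected total distortion is greater than or equal to the minimum of J over all tuples of deterministic encoding strategies (f¹_{1:T}, f²_{1:T}) used with the same l¹_{1:T}, l²_{1:T}, g_{1:T}. -/

import Mathlib

/-!
A behavioral strategy is derandomized one decision at a time. As a function of the family of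
distributions used at a single time `t`, the cost of a behavioral strategy is linear: every
trajectory contributes exactly one factor from time `t`. Grouping trajectories by the information
`(X_{0:t}, Z_{0:t-1})` available at time `t`, the cost is a sum over information states of an
average, under the distribution chosen there, of a cost that does not involve that distribution.
Replacing each distribution by a point mass at a minimizer therefore does not increase the cost
(`exists_row_le`). Repeating this over the times `t < T` (`exists_det_le`), first for encoder 1
with encoder 2 fixed and then for encoder 2, gives deterministic strategies `f1, f2` whose
point-mass strategies cost no more than `σ1, σ2`. Finally, a point-mass strategy gives weight one
to the trajectory `Zseq f x` and zero to all others (`rWeight_det`), so its behavioral cost `Jr`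
is the deterministic cost `J` (`Jr_det`).
-/


open Finset

namespace MTC

noncomputable section

/-- Probability of an event `E` under the weight function `p` on a finite sample space. -/
def Pr {Ω : Type*} [Fintype Ω] (p : Ω → ℝ) (E : Set Ω) : ℝ :=
  ∑ ω, E.indicator p ω

/-- Conditional probability `P(E ∣ F)`. -/
def cPr {Ω : Type*} [Fintype Ω] (p : Ω → ℝ) (E F : Set Ω) : ℝ :=
  Pr p (E ∩ F) / Pr p F

/-- Conditional expectation `E[φ ∣ F]`. -/
def cExp {Ω : Type*} [Fintype Ω] (p : Ω → ℝ) (φ : Ω → ℝ) (F : Set Ω) : ℝ :=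
  (∑ ω, F.indicator (fun ω' => p ω' * φ ω') ω) / Pr p F

/-- Extension of a trajectory `x : Fin T → X` to all of `ℕ` (junk after time `T-1`). -/
def pad {X : Type*} [Inhabited X] {T : ℕ} (x : Fin T → X) (n : ℕ) : X :=
  if h : n < T then x ⟨n, h⟩ else default

/-- A deterministic encoding strategy: at each (0-indexed) time `t` the transmitted symbol
is an arbitrary function of the observation history `X_{0:t}` and the past transmitted
symbols `Z_{0:t-1}`. -/
abbrev Strat (X Z : Type*) := (t : ℕ) → (Fin (t + 1) → X) → (Fin t → Z) → Z

/-- The transmitted-symbol process generated by strategy `f` on observation path `x`. -/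
def Zseq {X Z : Type*} (f : Strat X Z) (x : ℕ → X) : ℕ → Z
  | t => f t (fun i => x i.val) (fun i => Zseq f x i.val)
  termination_by t => t
  decreasing_by exact i.isLt

/-- The receiver-memory process: `Mseq l y t` is the memory content `M_{t-1}` of the paper
(after the symbols `y_0, …, y_{t-1}` have been processed), with the convention
`M_0 := default` (the paper's `M_0 := 0`). -/
def Mseq {Y M : Type*} [Inhabited M] (l : ℕ → M → Y → M) (y : ℕ → Y) : ℕ → M
  | 0 => default
  | t + 1 => l t (Mseq l y t) (y t)

/-- Weight of a trajectory of a (time-inhomogeneous) Markov chain with initial law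
`init a` and transition kernels `K t a`, for a given value `a` of the coupling
random variable. -/
def chainW {A X : Type*} [Inhabited X] (T : ℕ) (init : A → X → ℝ)
    (K : ℕ → A → X → X → ℝ) (a : A) (x : Fin T → X) : ℝ :=
  if T = 0 then 1
  else init a (pad x 0) * ∏ t ∈ Finset.range (T - 1), K t a (pad x t) (pad x (t + 1))

/-- Canonical sample space: the coupling variable `A`, the two source trajectories and
the two channel-noise trajectories. -/
abbrev Samp (A X1 X2 N1 N2 : Type*) (T : ℕ) :=
  A × (Fin T → X1) × (Fin T → X2) × (Fin T → N1) × (Fin T → N2)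

variable {A X1 X2 Z1 Z2 N1 N2 Y1 Y2 M1 M2 : Type*}

/-- The joint law of `(A, X¹_{1:T}, X²_{1:T}, N¹_{1:T}, N²_{1:T})`:
`P(X¹_1, X²_1, A) = P(X¹_1|A) P(X²_1|A) P(A)`, conditioned on `A` the two source
components are independent Markov chains with kernels `K1, K2`, and the channel noises
are mutually independent and independent of the source. -/
def jointP [Inhabited X1] [Inhabited X2] (T : ℕ)
    (pA : A → ℝ) (init1 : A → X1 → ℝ) (K1 : ℕ → A → X1 → X1 → ℝ)
    (init2 : A → X2 → ℝ) (K2 : ℕ → A → X2 → X2 → ℝ)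
    (q1 : ℕ → N1 → ℝ) (q2 : ℕ → N2 → ℝ) : Samp A X1 X2 N1 N2 T → ℝ :=
  fun ω =>
    pA ω.1 * chainW T init1 K1 ω.1 ω.2.1 * chainW T init2 K2 ω.1 ω.2.2.1 *
      (∏ t : Fin T, q1 t.val (ω.2.2.2.1 t)) * (∏ t : Fin T, q2 t.val (ω.2.2.2.2 t))

variable (T : ℕ)

/-- Encoder 1's transmitted symbol `Z¹_t` (a deterministic function of `X¹_{0:t}`). -/
def Z1f [Inhabited X1] (f1 : Strat X1 Z1) (ω : Samp A X1 X2 N1 N2 T) : ℕ → Z1 :=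
  Zseq f1 (pad ω.2.1)

/-- Encoder 2's transmitted symbol `Z²_t`. -/
def Z2f [Inhabited X2] (f2 : Strat X2 Z2) (ω : Samp A X1 X2 N1 N2 T) : ℕ → Z2 :=
  Zseq f2 (pad ω.2.2.1)

/-- Channel-1 output `Y¹_t = h¹_t(Z¹_t, N¹_t)`. -/
def Y1f [Inhabited X1] [Inhabited N1] (h1 : ℕ → Z1 → N1 → Y1) (f1 : Strat X1 Z1)
    (ω : Samp A X1 X2 N1 N2 T) : ℕ → Y1 :=
  fun t => h1 t (Z1f T f1 ω t) (pad ω.2.2.2.1 t)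

/-- Channel-2 output `Y²_t = h²_t(Z²_t, N²_t)`. -/
def Y2f [Inhabited X2] [Inhabited N2] (h2 : ℕ → Z2 → N2 → Y2) (f2 : Strat X2 Z2)
    (ω : Samp A X1 X2 N1 N2 T) : ℕ → Y2 :=
  fun t => h2 t (Z2f T f2 ω t) (pad ω.2.2.2.2 t)

/-- Receiver memory `M¹_{t-1}` for channel 1. -/
def M1f [Inhabited X1] [Inhabited N1] [Inhabited M1] (h1 : ℕ → Z1 → N1 → Y1)
    (f1 : Strat X1 Z1) (l1 : ℕ → M1 → Y1 → M1) (ω : Samp A X1 X2 N1 N2 T) : ℕ → M1 :=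
  Mseq l1 (Y1f T h1 f1 ω)

/-- Receiver memory `M²_{t-1}` for channel 2. -/
def M2f [Inhabited X2] [Inhabited N2] [Inhabited M2] (h2 : ℕ → Z2 → N2 → Y2)
    (f2 : Strat X2 Z2) (l2 : ℕ → M2 → Y2 → M2) (ω : Samp A X1 X2 N1 N2 T) : ℕ → M2 :=
  Mseq l2 (Y2f T h2 f2 ω)

/-- The receiver's estimate `X̂_t = g_t(Y¹_t, Y²_t, M¹_{t-1}, M²_{t-1})`. -/
def estf [Inhabited X1] [Inhabited X2] [Inhabited N1] [Inhabited N2]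
    [Inhabited M1] [Inhabited M2]
    (h1 : ℕ → Z1 → N1 → Y1) (h2 : ℕ → Z2 → N2 → Y2)
    (f1 : Strat X1 Z1) (f2 : Strat X2 Z2)
    (l1 : ℕ → M1 → Y1 → M1) (l2 : ℕ → M2 → Y2 → M2)
    (g : ℕ → Y1 → Y2 → M1 → M2 → X1 × X2 × A) (ω : Samp A X1 X2 N1 N2 T) :
    ℕ → X1 × X2 × A :=
  fun t => g t (Y1f T h1 f1 ω t) (Y2f T h2 f2 ω t) (M1f T h1 f1 l1 ω t) (M2f T h2 f2 l2 ω t)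

/-- The state `X_t = (X¹_t, X²_t, A)` of the source. -/
def Xst [Inhabited X1] [Inhabited X2] (ω : Samp A X1 X2 N1 N2 T) (t : ℕ) : X1 × X2 × A :=
  (pad ω.2.1 t, pad ω.2.2.1 t, ω.1)

/-- Expected total distortion `J = E[∑_{t=1}^T ρ_t(X_t, X̂_t)]`. -/
def J [Fintype A] [Fintype X1] [Fintype X2] [Fintype N1] [Fintype N2]
    [Inhabited X1] [Inhabited X2] [Inhabited N1] [Inhabited N2]
    [Inhabited M1] [Inhabited M2]
    (p : Samp A X1 X2 N1 N2 T → ℝ)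
    (h1 : ℕ → Z1 → N1 → Y1) (h2 : ℕ → Z2 → N2 → Y2)
    (ρ : ℕ → X1 × X2 × A → X1 × X2 × A → ℝ)
    (f1 : Strat X1 Z1) (f2 : Strat X2 Z2)
    (g : ℕ → Y1 → Y2 → M1 → M2 → X1 × X2 × A)
    (l1 : ℕ → M1 → Y1 → M1) (l2 : ℕ → M2 → Y2 → M2) : ℝ :=
  ∑ ω, p ω * ∑ t ∈ Finset.range T, ρ t (Xst T ω t) (estf T h1 h2 f1 f2 l1 l2 g ω t)

/-- Encoder 1's belief on `A`: `b¹_t(a) = P(A = a ∣ X¹_{0:t} = xs_{0:t})`. -/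
def belA [Fintype A] [Fintype X1] [Fintype X2] [Fintype N1] [Fintype N2]
    [Inhabited X1]
    (p : Samp A X1 X2 N1 N2 T → ℝ) (t : ℕ) (xs : ℕ → X1) : A → ℝ :=
  fun a => cPr p {ω : Samp A X1 X2 N1 N2 T | ω.1 = a} {ω | ∀ s ≤ t, pad ω.2.1 s = xs s}

/-- Encoder 1's belief on the receiver memory:
`μ¹_t(m) = P(M¹_{t-1} = m ∣ Z¹_{0:t-1} = zs_{0:t-1})`. -/
def belM [Fintype A] [Fintype X1] [Fintype X2] [Fintype N1] [Fintype N2]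
    [Inhabited X1] [Inhabited N1] [Inhabited M1]
    (p : Samp A X1 X2 N1 N2 T → ℝ) (h1 : ℕ → Z1 → N1 → Y1)
    (f1 : Strat X1 Z1) (l1 : ℕ → M1 → Y1 → M1) (t : ℕ) (zs : ℕ → Z1) : M1 → ℝ :=
  fun m =>
    cPr p {ω : Samp A X1 X2 N1 N2 T | M1f T h1 f1 l1 ω t = m}
      {ω | ∀ s < t, Z1f T f1 ω s = zs s}

/-- Encoder 2's belief on `A`. -/
def belA2 [Fintype A] [Fintype X1] [Fintype X2] [Fintype N1] [Fintype N2]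
    [Inhabited X2]
    (p : Samp A X1 X2 N1 N2 T → ℝ) (t : ℕ) (xs : ℕ → X2) : A → ℝ :=
  fun a => cPr p {ω : Samp A X1 X2 N1 N2 T | ω.1 = a} {ω | ∀ s ≤ t, pad ω.2.2.1 s = xs s}

/-- Encoder 2's belief on the receiver memory. -/
def belM2 [Fintype A] [Fintype X1] [Fintype X2] [Fintype N1] [Fintype N2]
    [Inhabited X2] [Inhabited N2] [Inhabited M2]
    (p : Samp A X1 X2 N1 N2 T → ℝ) (h2 : ℕ → Z2 → N2 → Y2)
    (f2 : Strat X2 Z2) (l2 : ℕ → M2 → Y2 → M2) (t : ℕ) (zs : ℕ → Z2) : M2 → ℝ :=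
  fun m =>
    cPr p {ω : Samp A X1 X2 N1 N2 T | M2f T h2 f2 l2 ω t = m}
      {ω | ∀ s < t, Z2f T f2 ω s = zs s}

end

/-- A randomized (behavioral) encoding strategy: at each time `t`, given the observation
history `X_{0:t}` and past transmitted symbols `Z_{0:t-1}`, the encoder selects a
probability distribution on the transmission alphabet `Z`. -/
abbrev RStrat (X Z : Type*) := (t : ℕ) → (Fin (t + 1) → X) → (Fin t → Z) → Z → ℝ

/-- The probability, under the behavioral strategy `σ` (whose randomizations are
independent across time instants and of everything else), that the transmitted symbols
up to time `T - 1` are `z_{0:T-1}`, given the observation path `x`. -/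
noncomputable def rWeight {X Z : Type*} (T : ℕ) (σ : RStrat X Z) (x : ℕ → X)
    (z : ℕ → Z) : ℝ :=
  ∏ t ∈ Finset.range T, σ t (fun i => x i.val) (fun i => z i.val) (z t)

/-- Expected total distortion when the two encoders use behavioral strategies `σ1, σ2`
whose randomizations are independent across encoders and time instants and independent
of the source and the channel noises, and the receiver uses the deterministic rules
`g, l1, l2`. -/
noncomputable def Jr {A X1 X2 Z1 Z2 N1 N2 Y1 Y2 M1 M2 : Type*}
    [Fintype A] [Fintype X1] [Fintype X2] [Fintype Z1] [Fintype Z2]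
    [Fintype N1] [Fintype N2]
    [Inhabited X1] [Inhabited X2] [Inhabited Z1] [Inhabited Z2]
    [Inhabited N1] [Inhabited N2] [Inhabited M1] [Inhabited M2]
    (T : ℕ) (p : Samp A X1 X2 N1 N2 T → ℝ)
    (h1 : ℕ → Z1 → N1 → Y1) (h2 : ℕ → Z2 → N2 → Y2)
    (ρ : ℕ → X1 × X2 × A → X1 × X2 × A → ℝ)
    (σ1 : RStrat X1 Z1) (σ2 : RStrat X2 Z2)
    (g : ℕ → Y1 → Y2 → M1 → M2 → X1 × X2 × A)
    (l1 : ℕ → M1 → Y1 → M1) (l2 : ℕ → M2 → Y2 → M2) : ℝ :=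
  ∑ ω, ∑ z1 : Fin T → Z1, ∑ z2 : Fin T → Z2,
    p ω * rWeight T σ1 (pad ω.2.1) (pad z1) * rWeight T σ2 (pad ω.2.2.1) (pad z2) *
      ∑ t ∈ Finset.range T,
        ρ t (Xst T ω t)
          (g t (h1 t (pad z1 t) (pad ω.2.2.2.1 t)) (h2 t (pad z2 t) (pad ω.2.2.2.2 t))
            (Mseq l1 (fun s => h1 s (pad z1 s) (pad ω.2.2.2.1 s)) t)
            (Mseq l2 (fun s => h2 s (pad z2 s) (pad ω.2.2.2.2 s)) t))

/-! ### Derandomizing one encoder against a fixed cost -/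

/-- The deterministic strategy `f` viewed as a behavioral strategy: at each information state it
puts all its mass on the symbol chosen by `f`. -/
noncomputable def det {X Z : Type*} (f : Strat X Z) : RStrat X Z :=
  open Classical in fun t x z zt => if zt = f t x z then 1 else 0

/-- Derandomization of a single decision: `h i` is the information state and `z i` the symbol on
trajectory `i`, and `c i` is the remaining weighted cost, of arbitrary sign. The minimizing symbol
is chosen separately at each information state. -/
lemma exists_row_le {ι H Z : Type*} [Fintype ι] [Fintype H] [Fintype Z] [Nonempty Z]
    (s : H → Z → ℝ) (hs : ∀ h, (∀ z, 0 ≤ s h z) ∧ ∑ z, s h z = 1)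
    (c : ι → ℝ) (h : ι → H) (z : ι → Z) :
    ∃ f : H → Z, ∑ i, c i * (open Classical in if z i = f (h i) then 1 else 0) ≤
      ∑ i, c i * s (h i) (z i) := by
  classical
  -- the total cost of sending `b` in the information state `a`
  let C : H → Z → ℝ := fun a b => ∑ i, if h i = a ∧ z i = b then c i else 0
  have key : ∀ r : H → Z → ℝ,
      ∑ i, c i * r (h i) (z i) = ∑ a, ∑ b, r a b * C a b := by
    intro r
    simp only [C, Finset.mul_sum]
    have : ∀ a, ∑ b, ∑ i, r a b * (if h i = a ∧ z i = b then c i else 0) =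
        ∑ i, ∑ b, r a b * (if h i = a ∧ z i = b then c i else 0) :=
      fun a => Finset.sum_comm
    simp only [this]
    rw [Finset.sum_comm]
    refine Finset.sum_congr rfl fun i _ => ?_
    simp [ite_and, mul_comm]
  choose f hf using fun a => Finite.exists_min (C a)
  refine ⟨f, ?_⟩
  rw [key s, key fun a b => if b = f a then 1 else 0]
  refine Finset.sum_le_sum fun a _ => ?_
  calc ∑ b, (if b = f a then 1 else 0) * C a b = ∑ b, s a b * C a (f a) := by
        rw [← Finset.sum_mul, (hs a).2]; simp
    _ ≤ ∑ b, s a b * C a b :=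
        Finset.sum_le_sum fun b _ => mul_le_mul_of_nonneg_left (hf a b) ((hs a).1 b)

/-- Derandomization of a whole strategy against an arbitrary fixed weighted cost `c` on a finite
set of trajectories `(x i, z i)`. -/
lemma exists_det_le {ι X Z : Type*} [Fintype ι] [Fintype X] [Fintype Z] [Nonempty Z]
    (σ : RStrat X Z) (hσ : ∀ t x z, (∀ zt, 0 ≤ σ t x z zt) ∧ ∑ zt, σ t x z zt = 1)
    (x : ι → ℕ → X) (z : ι → ℕ → Z) (T : ℕ) (c : ι → ℝ) :
    ∃ f : Strat X Z, ∑ i, c i * rWeight T (det f) (x i) (z i) ≤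
      ∑ i, c i * rWeight T σ (x i) (z i) := by
  classical
  induction T generalizing c with
  | zero => exact ⟨fun _ _ _ => Classical.arbitrary Z, by simp [rWeight]⟩
  | succ T ih =>
    -- the times before `T` are handled with the factor at time `T` absorbed into the cost
    obtain ⟨f, hf⟩ := ih fun i =>
      c i * σ T (fun j => x i j.val) (fun j => z i j.val) (z i T)
    obtain ⟨u, hu⟩ := exists_row_le
      (fun p : (Fin (T + 1) → X) × (Fin T → Z) => σ T p.1 p.2) (fun p => hσ T p.1 p.2)
      (fun i => c i * rWeight T (det f) (x i) (z i))
      (fun i => (fun j => x i j.val, fun j => z i j.val)) (fun i => z i T)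
    let f' : Strat X Z := fun t xs zs =>
      if e : t = T then u (fun j => xs (j.cast (by rw [e])), fun j => zs (j.cast e.symm))
      else f t xs zs
    have hbefore : ∀ i, rWeight T (det f') (x i) (z i) = rWeight T (det f) (x i) (z i) := by
      intro i
      refine Finset.prod_congr rfl fun t ht => ?_
      have hne : t ≠ T := (Finset.mem_range.mp ht).ne
      simp [det, f', hne]
    refine ⟨f', ?_⟩
    calc ∑ i, c i * rWeight (T + 1) (det f') (x i) (z i)
        = ∑ i, c i * rWeight T (det f) (x i) (z i) *
            (if z i T = u (fun j => x i j.val, fun j => z i j.val) then 1 else 0) := by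
          refine Finset.sum_congr rfl fun i _ => ?_
          rw [rWeight, Finset.prod_range_succ, ← rWeight, hbefore, ← mul_assoc]
          simp [det, f']
      _ ≤ ∑ i, c i * rWeight T (det f) (x i) (z i) *
            σ T (fun j => x i j.val) (fun j => z i j.val) (z i T) := hu
      _ = ∑ i, c i * σ T (fun j => x i j.val) (fun j => z i j.val) (z i T) *
            rWeight T (det f) (x i) (z i) :=
          Finset.sum_congr rfl fun i _ => by ring
      _ ≤ ∑ i, c i * σ T (fun j => x i j.val) (fun j => z i j.val) (z i T) *
            rWeight T σ (x i) (z i) := hf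
      _ = ∑ i, c i * rWeight (T + 1) σ (x i) (z i) := by
          refine Finset.sum_congr rfl fun i _ => ?_
          rw [rWeight, rWeight, Finset.prod_range_succ]
          ring

/-! ### Point-mass strategies reproduce the deterministic cost -/

lemma pad_of_lt {X : Type*} [Inhabited X] {T : ℕ} (x : Fin T → X) {n : ℕ} (h : n < T) :
    pad x n = x ⟨n, h⟩ := dif_pos h

/-- Under a point-mass strategy the trajectory generated by `f` has probability one. -/
lemma rWeight_det {X Z : Type*} [Inhabited Z] (T : ℕ) (f : Strat X Z) (x : ℕ → X)
    (z : Fin T → Z) :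
    rWeight T (det f) x (pad z) =
      open Classical in if z = (fun t => Zseq f x t.val) then 1 else 0 := by
  classical
  split_ifs with hz
  · refine Finset.prod_eq_one fun t ht => ?_
    have hp : ∀ s < T, pad z s = Zseq f x s := fun s hs => by rw [pad_of_lt z hs, hz]
    have htT := Finset.mem_range.mp ht
    have hpast : (fun i : Fin t => pad z i.val) = fun i => Zseq f x i.val :=
      funext fun i => hp _ (i.isLt.trans htT)
    rw [det, if_pos]
    rw [hpast, hp t htT, Zseq]
  · by_contra hne
    apply hz
    have hstep : ∀ t < T, pad z t = f t (fun i => x i.val) (fun i => pad z i.val) := by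
      intro t ht
      by_contra hbad
      exact hne (Finset.prod_eq_zero (Finset.mem_range.mpr ht) (if_neg hbad))
    have hp : ∀ t, t < T → pad z t = Zseq f x t := by
      intro t
      induction t using Nat.strong_induction_on with
      | _ t ih =>
        intro ht
        have hpast : (fun i : Fin t => pad z i.val) = fun i => Zseq f x i.val :=
          funext fun i => ih _ i.isLt (i.isLt.trans ht)
        rw [hstep t ht, hpast, Zseq]
    funext t
    rw [← hp t t.isLt, pad_of_lt z t.isLt]

/-- The memory before processing symbol `t` depends only on the symbols before time `t`. -/
lemma Mseq_congr {Y M : Type*} [Inhabited M] (l : ℕ → M → Y → M) {y y' : ℕ → Y} {t : ℕ}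
    (h : ∀ s < t, y s = y' s) : Mseq l y t = Mseq l y' t := by
  induction t with
  | zero => rfl
  | succ t ih => rw [Mseq, Mseq, ih fun s hs => h s (by omega), h t (by omega)]

/-- On point-mass strategies the behavioral cost is the deterministic cost. -/
lemma Jr_det {A X1 X2 Z1 Z2 N1 N2 Y1 Y2 M1 M2 : Type*}
    [Fintype A] [Fintype X1] [Fintype X2] [Fintype Z1] [Fintype Z2]
    [Fintype N1] [Fintype N2]
    [Inhabited X1] [Inhabited X2] [Inhabited Z1] [Inhabited Z2]
    [Inhabited N1] [Inhabited N2] [Inhabited M1] [Inhabited M2]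
    (T : ℕ) (p : Samp A X1 X2 N1 N2 T → ℝ)
    (h1 : ℕ → Z1 → N1 → Y1) (h2 : ℕ → Z2 → N2 → Y2)
    (ρ : ℕ → X1 × X2 × A → X1 × X2 × A → ℝ)
    (f1 : Strat X1 Z1) (f2 : Strat X2 Z2)
    (g : ℕ → Y1 → Y2 → M1 → M2 → X1 × X2 × A)
    (l1 : ℕ → M1 → Y1 → M1) (l2 : ℕ → M2 → Y2 → M2) :
    Jr T p h1 h2 ρ (det f1) (det f2) g l1 l2 = J T p h1 h2 ρ f1 f2 g l1 l2 := by
  classical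
  refine Finset.sum_congr rfl fun ω _ => ?_
  simp only [rWeight_det, mul_ite, ite_mul, mul_one, mul_zero, zero_mul,
    Finset.sum_ite_eq', Finset.mem_univ, if_true]
  congr 1
  refine Finset.sum_congr rfl fun t ht => ?_
  have htT := Finset.mem_range.mp ht
  have e1 : ∀ s < T, pad (fun t : Fin T => Zseq f1 (pad ω.2.1) t.val) s =
      Zseq f1 (pad ω.2.1) s := fun s hs => pad_of_lt _ hs
  have e2 : ∀ s < T, pad (fun t : Fin T => Zseq f2 (pad ω.2.2.1) t.val) s =
      Zseq f2 (pad ω.2.2.1) s := fun s hs => pad_of_lt _ hs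
  rw [estf, M1f, M2f, e1 t htT, e2 t htT,
    Mseq_congr l1 (y' := Y1f T h1 f1 ω) fun s hs => by rw [e1 s (hs.trans htT)]; rfl,
    Mseq_congr l2 (y' := Y2f T h2 f2 ω) fun s hs => by rw [e2 s (hs.trans htT)]; rfl]
  rfl

/-- **Randomization cannot help.** For any behavioral (randomized) encoding strategies
`σ1, σ2` used with deterministic receiver rules `g, l1, l2`, the resulting expected
total distortion is at least that of some tuple of deterministic encoding strategies
`(f1, f2)` used with the same `g, l1, l2`. -/
theorem randomization_cannot_help
    {A X1 X2 Z1 Z2 N1 N2 Y1 Y2 M1 M2 : Type*}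
    [Fintype A] [Fintype X1] [Fintype X2] [Fintype Z1] [Fintype Z2]
    [Fintype N1] [Fintype N2] [Fintype Y1] [Fintype Y2] [Fintype M1] [Fintype M2]
    [Inhabited X1] [Inhabited X2] [Inhabited Z1] [Inhabited Z2]
    [Inhabited N1] [Inhabited N2] [Inhabited M1] [Inhabited M2]
    (T : ℕ)
    (pA : A → ℝ) (init1 : A → X1 → ℝ) (K1 : ℕ → A → X1 → X1 → ℝ)
    (init2 : A → X2 → ℝ) (K2 : ℕ → A → X2 → X2 → ℝ)
    (q1 : ℕ → N1 → ℝ) (q2 : ℕ → N2 → ℝ)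
    (h1 : ℕ → Z1 → N1 → Y1) (h2 : ℕ → Z2 → N2 → Y2)
    (ρ : ℕ → X1 × X2 × A → X1 × X2 × A → ℝ)
    (hpA : (∀ a, 0 ≤ pA a) ∧ ∑ a, pA a = 1)
    (hinit1 : ∀ a, (∀ x, 0 ≤ init1 a x) ∧ ∑ x, init1 a x = 1)
    (hK1 : ∀ t a x, (∀ x', 0 ≤ K1 t a x x') ∧ ∑ x', K1 t a x x' = 1)
    (hinit2 : ∀ a, (∀ x, 0 ≤ init2 a x) ∧ ∑ x, init2 a x = 1)
    (hK2 : ∀ t a x, (∀ x', 0 ≤ K2 t a x x') ∧ ∑ x', K2 t a x x' = 1)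
    (hq1 : ∀ t, (∀ n, 0 ≤ q1 t n) ∧ ∑ n, q1 t n = 1)
    (hq2 : ∀ t, (∀ n, 0 ≤ q2 t n) ∧ ∑ n, q2 t n = 1)
    (hρ : ∀ t x x', 0 ≤ ρ t x x')
    -- fixed deterministic receiver rules
    (g : ℕ → Y1 → Y2 → M1 → M2 → X1 × X2 × A)
    (l1 : ℕ → M1 → Y1 → M1) (l2 : ℕ → M2 → Y2 → M2)
    -- behavioral strategies of the two encoders
    (σ1 : RStrat X1 Z1) (σ2 : RStrat X2 Z2)
    (hσ1 : ∀ t x z, (∀ zt, 0 ≤ σ1 t x z zt) ∧ ∑ zt, σ1 t x z zt = 1)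
    (hσ2 : ∀ t x z, (∀ zt, 0 ≤ σ2 t x z zt) ∧ ∑ zt, σ2 t x z zt = 1) :
    ∃ (f1 : Strat X1 Z1) (f2 : Strat X2 Z2),
      J T (jointP T pA init1 K1 init2 K2 q1 q2) h1 h2 ρ f1 f2 g l1 l2 ≤
        Jr T (jointP T pA init1 K1 init2 K2 q1 q2) h1 h2 ρ σ1 σ2 g l1 l2 := by
  -- the cost of a joint trajectory of source, noises and transmitted symbols, before weighting
  -- by the encoders' randomizations
  let c : Samp A X1 X2 N1 N2 T × (Fin T → Z1) × (Fin T → Z2) → ℝ := fun i =>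
    jointP T pA init1 K1 init2 K2 q1 q2 i.1 * ∑ t ∈ Finset.range T,
        ρ t (Xst T i.1 t)
          (g t (h1 t (pad i.2.1 t) (pad i.1.2.2.2.1 t)) (h2 t (pad i.2.2 t) (pad i.1.2.2.2.2 t))
            (Mseq l1 (fun s => h1 s (pad i.2.1 s) (pad i.1.2.2.2.1 s)) t)
            (Mseq l2 (fun s => h2 s (pad i.2.2 s) (pad i.1.2.2.2.2 s)) t))
  have hJr : ∀ (τ1 : RStrat X1 Z1) (τ2 : RStrat X2 Z2),
      Jr T (jointP T pA init1 K1 init2 K2 q1 q2) h1 h2 ρ τ1 τ2 g l1 l2 =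
        ∑ i, c i * rWeight T τ1 (pad i.1.2.1) (pad i.2.1) *
          rWeight T τ2 (pad i.1.2.2.1) (pad i.2.2) := by
    intro τ1 τ2
    rw [Fintype.sum_prod_type, Jr]
    refine Finset.sum_congr rfl fun ω _ => ?_
    rw [Fintype.sum_prod_type]
    refine Finset.sum_congr rfl fun z1 _ => Finset.sum_congr rfl fun z2 _ => ?_
    simp only [c]
    ring
  obtain ⟨f1, hf1⟩ := exists_det_le σ1 hσ1 (fun i => pad i.1.2.1) (fun i => pad i.2.1) T
    (fun i => c i * rWeight T σ2 (pad i.1.2.2.1) (pad i.2.2))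
  obtain ⟨f2, hf2⟩ := exists_det_le σ2 hσ2 (fun i => pad i.1.2.2.1) (fun i => pad i.2.2) T
    (fun i => c i * rWeight T (det f1) (pad i.1.2.1) (pad i.2.1))
  refine ⟨f1, f2, ?_⟩
  rw [← Jr_det, hJr, hJr]
  refine hf2.trans ?_
  simpa only [mul_right_comm] using hf1

end MTC
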